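/- arXiv:1510.00761 — 2 statements merged into one kernel-verified Lean document; each statement's English description precedes it below -/
import Mathlib

section
/- Fix n ≥ 1, a compact set D ⊆ [0,1]^n, a twice continuously differentiable vector field f : ℝ^n → ℝ^n, a flow φ : [0,∞) × D → D with ∂φ/∂t(t,x) = f(φ(t,x)) and φ(0,x) = x, and a unique equilibrium point x* ∈ D (f(x*) = 0). Suppose the flow is globally asymptotically stable and locally exponentially stable. Suppose that for each integer M ≥ 1 we are given a finite set S_M ⊆ D, normalized transition rates q_M : S_M × S_M → ℝ≥0 with q_M(x,x) = 0, and a stationary distribution π_M of the continuous-time Markov chain with rates Q_M(x,y) = M·q_M(x,y), and that there exist constants c > 0 and c̃ > 0, independent of M, such that: (i) bounded transition rate: Σ_{x∈S_M} π_M(x) Σ_{y≠x} q_M(x,y) ≤ c for all M; (ii) bounded state transitions: q_M(x,y) > 0 implies ‖y − x‖ ≤ c̃/M; (iii) perfect mean-field model: f(x) = M·Σ_{y≠x} q_M(x,y)(y − x) for every x ∈ S_M and every M. Then there exist a constant C > 0 and an integer M₀ such that for all M ≥ M₀, Σ_{x∈S_M} π_M(x)·‖x − x*‖² ≤ C/M;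 that is, the stationary distributions converge to x* in the mean-square sense with rate 1/M. -/
open Filter MeasureTheory

attribute [local instance] Classical.propDecidable

/-!
By compactness of `D`, attraction and local exponential stability together give a time `T` with
`‖φ T x - x₀‖ ≤ ‖x - x₀‖ / 2` for all `x ∈ D`, so `V x = ∫ t in 0..T, ‖φ t x - x₀‖ ^ 2` is a
Lyapunov function: its derivative along `f` is `‖φ T x - x₀‖ ^ 2 - ‖x - x₀‖ ^ 2`.

Let `U` be the fundamental solution of the equation linearised along the trajectory of `x`. Then
`U t (f x) = f (φ t x)`, and `φ t y - φ t x - U t (y - x)` is quadratically small in `y - x` by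
Grönwall, so `V` has a first-order expansion on `D` with quadratic remainder. Since the jumps have
mean velocity `f` and size at most `c' / M`, the generator applied to `V` is at most
`-‖x - x₀‖ ^ 2 / 2` plus an error whose stationary mean is `O(1 / M)`. The stationary mean of the
generator vanishes.
-/

open Set
open scoped NNReal RealInnerProductSpace Topology

section RadialTruncation

variable {E : Type*} [NormedAddCommGroup E] {R : ℝ}

theorem div_max_le_one (hR : 0 < R) (r : ℝ) : R / max R r ≤ 1 :=
  div_le_one_of_le₀ (le_max_left R r) (hR.le.trans (le_max_left R r))

theorem abs_div_max_norm_sub_mul_norm_le (hR : 0 < R) (x y : E) :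
    |R / max R ‖x‖ - R / max R ‖y‖| * ‖y‖ ≤ ‖x - y‖ := by
  have hx : 0 < max R ‖x‖ := lt_max_of_lt_left hR
  have hy : 0 < max R ‖y‖ := lt_max_of_lt_left hR
  have factor : R / max R ‖x‖ - R / max R ‖y‖
      = R / max R ‖x‖ * ((max R ‖y‖ - max R ‖x‖) / max R ‖y‖) := by field_simp
  have max_diff : |max R ‖y‖ - max R ‖x‖| ≤ ‖x - y‖ := by
    rw [norm_sub_rev, max_comm R, max_comm R]
    exact (abs_max_sub_max_le_abs ‖y‖ ‖x‖ R).trans (abs_norm_sub_norm_le y x)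
  rw [factor, abs_mul, abs_of_pos (div_pos hR hx), abs_div, abs_of_pos hy]
  calc R / max R ‖x‖ * (|max R ‖y‖ - max R ‖x‖| / max R ‖y‖) * ‖y‖
      ≤ 1 * (‖x - y‖ / max R ‖y‖) * max R ‖y‖ := by
        gcongr
        · exact div_max_le_one hR _
        · exact le_max_right _ _
    _ = ‖x - y‖ := by field_simp

variable [NormedSpace ℝ E]

/-- The radial retraction onto the closed ball of radius `R > 0` about `0`. Writing the factor
`min 1 (R / ‖x‖)` as `R / max R ‖x‖` keeps the denominator positive. -/
noncomputable def radialTruncation (R : ℝ) (x : E) : E := (R / max R ‖x‖) • x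

theorem radialTruncation_of_norm_le (hR : 0 < R) {x : E} (hx : ‖x‖ ≤ R) :
    radialTruncation R x = x := by
  rw [radialTruncation, max_eq_left hx, div_self hR.ne', one_smul]

theorem norm_radialTruncation (hR : 0 < R) (x : E) :
    ‖radialTruncation R x‖ = R / max R ‖x‖ * ‖x‖ := by
  rw [radialTruncation, norm_smul, Real.norm_of_nonneg (by positivity)]

theorem norm_radialTruncation_le_norm (hR : 0 < R) (x : E) : ‖radialTruncation R x‖ ≤ ‖x‖ := by
  rw [norm_radialTruncation hR]
  exact mul_le_of_le_one_left (norm_nonneg x) (div_max_le_one hR _)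

theorem norm_radialTruncation_le (hR : 0 < R) (x : E) : ‖radialTruncation R x‖ ≤ R := by
  rw [norm_radialTruncation hR, div_mul_eq_mul_div, div_le_iff₀ (lt_max_of_lt_left hR)]
  gcongr
  exact le_max_right _ _

theorem lipschitzWith_radialTruncation (hR : 0 < R) :
    LipschitzWith 2 (radialTruncation R : E → E) := by
  refine LipschitzWith.of_dist_le_mul fun x y ↦ ?_
  have split : radialTruncation R x - radialTruncation R y
      = (R / max R ‖x‖) • (x - y) + (R / max R ‖x‖ - R / max R ‖y‖) • y := by
    unfold radialTruncation
    module
  rw [dist_eq_norm, dist_eq_norm, split, NNReal.coe_ofNat, two_mul]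
  refine norm_add_le_of_le ?_ ?_
  · rw [norm_smul, Real.norm_of_nonneg (by positivity)]
    exact mul_le_of_le_one_left (norm_nonneg _) (div_max_le_one hR _)
  · rw [norm_smul, Real.norm_eq_abs]
    exact abs_div_max_norm_sub_mul_norm_le hR x y

end RadialTruncation

section GlobalExistence

variable {E : Type*} [NormedAddCommGroup E] [NormedSpace ℝ E]
  {v : ℝ → E → E} {γ : ℝ → E} {K L : ℝ≥0} {a b β : ℝ}

theorem hasDerivWithinAt_Ici_of_Icc {γ' : E} {t : ℝ} (h : HasDerivWithinAt γ γ' (Icc a b) t)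
    (ht : t ∈ Ico a b) : HasDerivWithinAt γ γ' (Ici t) t :=
  h.mono_of_mem_nhdsWithin (Icc_mem_nhdsGE_of_mem ht)

theorem gronwallBound_nonneg {δ k ε t : ℝ} (hδ : 0 ≤ δ) (hk : 0 ≤ k) (hε : 0 ≤ ε) (ht : 0 ≤ t) :
    0 ≤ gronwallBound δ k ε t :=
  calc 0 ≤ gronwallBound δ k ε 0 := by rwa [gronwallBound_x0]
    _ ≤ gronwallBound δ k ε t := gronwallBound_mono hδ hε hk ht

theorem gronwallBound_zero_left_eq_mul (k ε t : ℝ) :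
    gronwallBound 0 k ε t = ε * gronwallBound 0 k 1 t := by
  unfold gronwallBound
  split_ifs <;> ring

theorem norm_le_gronwallBound_of_isIntegralCurveOn (hγ : IsIntegralCurveOn γ v (Icc a b))
    (hv : ∀ t ∈ Icc a b, ∀ x, ‖v t x‖ ≤ K * ‖x‖ + β) (hβ : 0 ≤ β) {t : ℝ} (ht : t ∈ Icc a b) :
    ‖γ t‖ ≤ gronwallBound ‖γ a‖ K β (b - a) :=
  calc ‖γ t‖ ≤ gronwallBound ‖γ a‖ K β (t - a) :=
        norm_le_gronwallBound_of_norm_deriv_right_le hγ.continuousOn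
          (fun s hs ↦ hasDerivWithinAt_Ici_of_Icc (hγ s (Ico_subset_Icc_self hs)) hs) le_rfl
          (fun s hs ↦ hv s (Ico_subset_Icc_self hs) (γ s)) t ht
    _ ≤ gronwallBound ‖γ a‖ K β (b - a) :=
        gronwallBound_mono (norm_nonneg _) hβ K.2 (sub_le_sub_right ht.2 a)

variable [CompleteSpace E]

theorem exists_isIntegralCurveOn_Icc_of_norm_le (hab : a ≤ b)
    (hlip : ∀ t ∈ Icc a b, LipschitzWith K (v t)) (hcont : ∀ x, ContinuousOn (v · x) (Icc a b))
    (hbound : ∀ t ∈ Icc a b, ∀ x, ‖v t x‖ ≤ L) (x₀ : E) :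
    ∃ γ : ℝ → E, γ a = x₀ ∧ IsIntegralCurveOn γ v (Icc a b) := by
  have picardLindelof : IsPicardLindelof v ⟨a, left_mem_Icc.2 hab⟩ x₀
      (L * (b - a).toNNReal) 0 L K :=
    { lipschitzOnWith := fun t ht ↦ (hlip t ht).lipschitzOnWith
      continuousOn := fun x _ ↦ hcont x
      norm_le := fun t ht x _ ↦ hbound t ht x
      mul_max_le := by simp [hab] }
  exact picardLindelof.exists_eq_forall_mem_Icc_hasDerivWithinAt₀

/- Truncating the field outside a large ball makes it bounded, and by Grönwall the truncated
solution never leaves that ball. -/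
theorem exists_isIntegralCurveOn_Icc_of_lipschitzWith (hab : a ≤ b)
    (hlip : ∀ t ∈ Icc a b, LipschitzWith K (v t)) (hcont : ∀ x, ContinuousOn (v · x) (Icc a b))
    (x₀ : E) : ∃ γ : ℝ → E, γ a = x₀ ∧ IsIntegralCurveOn γ v (Icc a b) := by
  obtain ⟨β, hβ⟩ := isCompact_Icc.exists_bound_of_continuousOn (hcont 0)
  have β_nonneg : 0 ≤ β := (norm_nonneg _).trans (hβ a (left_mem_Icc.2 hab))
  have growth : ∀ t ∈ Icc a b, ∀ x, ‖v t x‖ ≤ K * ‖x‖ + β := fun t ht x ↦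
    calc ‖v t x‖ ≤ ‖v t x - v t 0‖ + ‖v t 0‖ := norm_le_norm_sub_add _ _
      _ ≤ K * ‖x‖ + β := by
        gcongr
        · simpa using (hlip t ht).norm_sub_le x 0
        · exact hβ t ht
  set R : ℝ := gronwallBound ‖x₀‖ K β (b - a) + 1
  have hR : 0 < R := by
    have := gronwallBound_nonneg (norm_nonneg x₀) K.2 β_nonneg (sub_nonneg.2 hab)
    positivity
  obtain ⟨γ, hγa, hγ⟩ := exists_isIntegralCurveOn_Icc_of_norm_le
    (v := fun t x ↦ v t (radialTruncation R x)) (L := (K * R + β).toNNReal) hab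
    (fun t ht ↦ (hlip t ht).comp (lipschitzWith_radialTruncation hR))
    (fun x ↦ hcont _)
    (fun t ht x ↦ by
      rw [Real.coe_toNNReal _ (by positivity)]
      grw [growth t ht, norm_radialTruncation_le hR])
    x₀
  have norm_γ_le : ∀ t ∈ Icc a b, ‖γ t‖ ≤ R := fun t ht ↦ by
    have := norm_le_gronwallBound_of_isIntegralCurveOn hγ
      (fun s hs x ↦ by grw [growth s hs, norm_radialTruncation_le_norm hR]) β_nonneg ht
    rw [hγa] at this
    linarith
  refine ⟨γ, hγa, fun t ht ↦ ?_⟩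
  simpa only [radialTruncation_of_norm_le hR (norm_γ_le t ht)] using hγ t ht

end GlobalExistence

section LipschitzDerivative

variable {E F : Type*} [NormedAddCommGroup E] [NormedSpace ℝ E]
  [NormedAddCommGroup F] [NormedSpace ℝ F] {f : E → F} {L K : ℝ≥0} {s : Set E}

/-- `f` is of class `C^{1,1}` on `s`, with explicit constants: `L` bounds its derivative there and
`K` is a Lipschitz constant of the derivative. The derivative is the full one, `s` need not be
open. -/
structure HasLipschitzFDerivOn (f : E → F) (L K : ℝ≥0) (s : Set E) : Prop where
  differentiableAt : ∀ x ∈ s, DifferentiableAt ℝ f x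
  nnnorm_fderiv_le : ∀ x ∈ s, ‖fderiv ℝ f x‖₊ ≤ L
  lipschitzOnWith_fderiv : LipschitzOnWith K (fderiv ℝ f) s

theorem HasLipschitzFDerivOn.lipschitzOnWith (hf : HasLipschitzFDerivOn f L K s)
    (hs : Convex ℝ s) : LipschitzOnWith L f s :=
  hs.lipschitzOnWith_of_nnnorm_fderiv_le hf.differentiableAt hf.nnnorm_fderiv_le

theorem HasLipschitzFDerivOn.norm_sub_sub_fderiv_le (hf : HasLipschitzFDerivOn f L K s)
    (hs : Convex ℝ s) {x y : E} (hx : x ∈ s) (hy : y ∈ s) :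
    ‖f y - f x - fderiv ℝ f x (y - x)‖ ≤ K * ‖y - x‖ ^ 2 := by
  have hseg : segment ℝ x y ⊆ s := hs.segment_subset hx hy
  have fderiv_close : ∀ z ∈ segment ℝ x y, ‖fderiv ℝ f z - fderiv ℝ f x‖ ≤ K * ‖y - x‖ :=
    fun z hz ↦ by
      grw [hf.lipschitzOnWith_fderiv.norm_sub_le (hseg hz) hx, norm_sub_le_of_mem_segment hz]
  calc ‖f y - f x - fderiv ℝ f x (y - x)‖ ≤ K * ‖y - x‖ * ‖y - x‖ :=
        (convex_segment x y).norm_image_sub_le_of_norm_fderiv_le'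
          (fun z hz ↦ hf.differentiableAt z (hseg hz)) fderiv_close
          (left_mem_segment ℝ x y) (right_mem_segment ℝ x y)
    _ = K * ‖y - x‖ ^ 2 := by ring

theorem isCompact_closedConvexHull [CompleteSpace E] (hs : IsCompact s) :
    IsCompact (closedConvexHull ℝ s) := by
  rw [closedConvexHull_eq_closure_convexHull]
  exact hs.totallyBounded.convexHull.closure.isCompact_of_isClosed isClosed_closure

theorem exists_hasLipschitzFDerivOn_of_isCompact (hf : Differentiable ℝ f)
    (hf' : LocallyLipschitz (fderiv ℝ f)) (hs : IsCompact s) :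
    ∃ L K, HasLipschitzFDerivOn f L K s := by
  obtain ⟨L, hL⟩ := hs.exists_bound_of_continuousOn hf'.continuous.continuousOn
  obtain ⟨K, hK⟩ := hf'.locallyLipschitzOn.exists_lipschitzOnWith_of_compact hs
  exact ⟨L.toNNReal, K, fun x _ ↦ hf x, fun x hx ↦ NNReal.le_toNNReal_of_coe_le (hL x hx), hK⟩

end LipschitzDerivative

section FundamentalSolution

variable {E : Type*} [NormedAddCommGroup E] [NormedSpace ℝ E]
  {A : ℝ → E →L[ℝ] E} {U : ℝ → E →L[ℝ] E} {L : ℝ≥0} {T ε : ℝ}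

/-- `U` is the fundamental solution on `[0, T]` of the linear equation `u' = A t u`, normalised by
`U 0 = id`. -/
structure IsFundamentalSolution (A : ℝ → E →L[ℝ] E) (T : ℝ) (U : ℝ → E →L[ℝ] E) : Prop where
  map_zero : U 0 = ContinuousLinearMap.id ℝ E
  isIntegralCurveOn : IsIntegralCurveOn U (fun t W ↦ (A t).comp W) (Icc 0 T)

theorem exists_isFundamentalSolution [CompleteSpace E] (hT : 0 ≤ T)
    (hA : ContinuousOn A (Icc 0 T)) : ∃ U, IsFundamentalSolution A T U := by
  obtain ⟨L, hL⟩ := isCompact_Icc.exists_bound_of_continuousOn hA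
  obtain ⟨U, hU₀, hU⟩ := exists_isIntegralCurveOn_Icc_of_lipschitzWith
    (v := fun t (W : E →L[ℝ] E) ↦ (A t).comp W) (K := L.toNNReal) hT
    (fun t ht ↦ LipschitzWith.of_dist_le_mul fun W W' ↦ by
      rw [dist_eq_norm, dist_eq_norm, ← ContinuousLinearMap.comp_sub]
      grw [ContinuousLinearMap.opNorm_comp_le, hL t ht, Real.le_coe_toNNReal L])
    (fun W ↦ hA.clm_comp continuousOn_const) (ContinuousLinearMap.id ℝ E)
  exact ⟨U, hU₀, hU⟩

theorem IsFundamentalSolution.isIntegralCurveOn_apply (hU : IsFundamentalSolution A T U) (v : E) :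
    IsIntegralCurveOn (fun t ↦ U t v) (fun t u ↦ A t u) (Icc 0 T) := fun t ht ↦ by
  simpa using (hU.isIntegralCurveOn t ht).clm_apply (hasDerivWithinAt_const t (Icc 0 T) v)

theorem IsFundamentalSolution.norm_sub_apply_le (hU : IsFundamentalSolution A T U)
    (hA : ∀ t ∈ Icc 0 T, ‖A t‖₊ ≤ L) {u u' : ℝ → E}
    (hu : ∀ t ∈ Icc 0 T, HasDerivWithinAt u (u' t) (Icc 0 T) t)
    (hε : ∀ t ∈ Icc 0 T, ‖u' t - A t (u t)‖ ≤ ε) {t : ℝ} (ht : t ∈ Icc 0 T) :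
    ‖u t - U t (u 0)‖ ≤ gronwallBound 0 L ε t := by
  have hUu := hU.isIntegralCurveOn_apply (u 0)
  have := dist_le_of_approx_trajectories_ODE_of_mem (v := fun t ↦ A t) (s := fun _ ↦ univ)
    (εf := ε) (εg := 0) (δ := 0)
    (fun s hs ↦ ((A s).lipschitz.weaken (hA s (Ico_subset_Icc_self hs))).lipschitzOnWith)
    (fun s hs ↦ (hu s hs).continuousWithinAt)
    (fun s hs ↦ hasDerivWithinAt_Ici_of_Icc (hu s (Ico_subset_Icc_self hs)) hs)
    (fun s hs ↦ by simpa only [dist_eq_norm] using hε s (Ico_subset_Icc_self hs))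
    (fun _ _ ↦ mem_univ _) hUu.continuousOn
    (fun s hs ↦ hasDerivWithinAt_Ici_of_Icc (hUu s (Ico_subset_Icc_self hs)) hs)
    (fun _ _ ↦ (dist_self _).le) (fun _ _ ↦ mem_univ _) (by simp [hU.map_zero]) t ht
  rwa [dist_eq_norm, add_zero, sub_zero] at this

theorem IsFundamentalSolution.apply_eq (hU : IsFundamentalSolution A T U)
    (hA : ∀ t ∈ Icc 0 T, ‖A t‖₊ ≤ L) {u : ℝ → E}
    (hu : IsIntegralCurveOn u (fun t ↦ A t) (Icc 0 T)) {t : ℝ} (ht : t ∈ Icc 0 T) :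
    U t (u 0) = u t := by
  have := hU.norm_sub_apply_le hA hu (ε := 0) (fun s _ ↦ by simp) ht
  rw [gronwallBound_ε0_δ0] at this
  exact (sub_eq_zero.1 (norm_le_zero_iff.1 this)).symm

end FundamentalSolution

section Trajectories

variable {E : Type*} [NormedAddCommGroup E] [NormedSpace ℝ E] {f : E → E} {L K : ℝ≥0} {s : Set E}
  {T : ℝ} {γ η : ℝ → E}

theorem norm_sub_le_mul_exp_of_isIntegralCurveOn (hf : LipschitzOnWith L f s)
    (hγ : IsIntegralCurveOn γ (fun _ ↦ f) (Icc 0 T)) (hγs : MapsTo γ (Icc 0 T) s)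
    (hη : IsIntegralCurveOn η (fun _ ↦ f) (Icc 0 T)) (hηs : MapsTo η (Icc 0 T) s)
    {t : ℝ} (ht : t ∈ Icc 0 T) : ‖γ t - η t‖ ≤ ‖γ 0 - η 0‖ * Real.exp (L * t) := by
  have := dist_le_of_trajectories_ODE_of_mem (v := fun _ ↦ f) (s := fun _ ↦ s) (fun _ _ ↦ hf)
    hγ.continuousOn
    (fun t ht ↦ hasDerivWithinAt_Ici_of_Icc (hγ t (Ico_subset_Icc_self ht)) ht)
    (fun t ht ↦ hγs (Ico_subset_Icc_self ht)) hη.continuousOn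
    (fun t ht ↦ hasDerivWithinAt_Ici_of_Icc (hη t (Ico_subset_Icc_self ht)) ht)
    (fun t ht ↦ hηs (Ico_subset_Icc_self ht)) le_rfl t ht
  rwa [dist_eq_norm, dist_eq_norm, sub_zero] at this

theorem exists_isFundamentalSolution_fderiv [CompleteSpace E] (hf : HasLipschitzFDerivOn f L K s)
    (hT : 0 ≤ T) (hγ : ContinuousOn γ (Icc 0 T)) (hγs : MapsTo γ (Icc 0 T) s) :
    ∃ U, IsFundamentalSolution (fun t ↦ fderiv ℝ f (γ t)) T U :=
  exists_isFundamentalSolution hT (hf.lipschitzOnWith_fderiv.continuousOn.comp hγ hγs)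

variable {U : ℝ → E →L[ℝ] E}

theorem IsFundamentalSolution.apply_velocity
    (hU : IsFundamentalSolution (fun t ↦ fderiv ℝ f (γ t)) T U)
    (hf : HasLipschitzFDerivOn f L K s)
    (hγ : IsIntegralCurveOn γ (fun _ ↦ f) (Icc 0 T)) (hγs : MapsTo γ (Icc 0 T) s)
    {t : ℝ} (ht : t ∈ Icc 0 T) : U t (f (γ 0)) = f (γ t) :=
  hU.apply_eq (u := fun t ↦ f (γ t)) (fun _ ht ↦ hf.nnnorm_fderiv_le _ (hγs ht))
    (fun t ht ↦ (hf.differentiableAt _ (hγs ht)).hasFDerivAt.comp_hasDerivWithinAt t (hγ t ht)) ht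

theorem IsFundamentalSolution.norm_sub_sub_apply_le
    (hU : IsFundamentalSolution (fun t ↦ fderiv ℝ f (γ t)) T U)
    (hf : HasLipschitzFDerivOn f L K s) (hs : Convex ℝ s)
    (hγ : IsIntegralCurveOn γ (fun _ ↦ f) (Icc 0 T)) (hγs : MapsTo γ (Icc 0 T) s)
    (hη : IsIntegralCurveOn η (fun _ ↦ f) (Icc 0 T)) (hηs : MapsTo η (Icc 0 T) s)
    {t : ℝ} (ht : t ∈ Icc 0 T) :
    ‖η t - γ t - U t (η 0 - γ 0)‖
      ≤ K * (‖η 0 - γ 0‖ * Real.exp (L * T)) ^ 2 * gronwallBound 0 L 1 T := by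
  have remainder_le : ∀ t ∈ Icc 0 T, ‖f (η t) - f (γ t) - fderiv ℝ f (γ t) (η t - γ t)‖
      ≤ K * (‖η 0 - γ 0‖ * Real.exp (L * T)) ^ 2 := fun t ht ↦ by
    grw [hf.norm_sub_sub_fderiv_le hs (hγs ht) (hηs ht),
      norm_sub_le_mul_exp_of_isIntegralCurveOn (hf.lipschitzOnWith hs) hη hηs hγ hγs ht, ht.2]
  grw [hU.norm_sub_apply_le (u := fun t ↦ η t - γ t)
    (fun _ ht ↦ hf.nnnorm_fderiv_le _ (hγs ht))
    (fun t ht ↦ (hη t ht).sub (hγ t ht)) remainder_le ht, gronwallBound_zero_left_eq_mul,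
    gronwallBound_mono le_rfl zero_le_one L.coe_nonneg ht.2]

end Trajectories

section QuadraticCost

variable {E : Type*} [NormedAddCommGroup E] [InnerProductSpace ℝ E]
  {f : E → E} {L K : ℝ≥0} {s : Set E} {T R : ℝ} {γ η : ℝ → E} {U : ℝ → E →L[ℝ] E} {x₀ : E}

/-- The accumulated squared distance of the curve `γ` to `x₀` up to time `T`. -/
noncomputable def quadraticCost (x₀ : E) (T : ℝ) (γ : ℝ → E) : ℝ :=
  ∫ t in (0)..T, ‖γ t - x₀‖ ^ 2

/-- The differential of `quadraticCost x₀ T` at the trajectory `γ` with respect to its starting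
point, when `U t` is the differential of `γ t` with respect to `γ 0`. -/
noncomputable def quadraticCostDeriv (x₀ : E) (T : ℝ) (γ : ℝ → E) (U : ℝ → E →L[ℝ] E) :
    E →L[ℝ] ℝ :=
  ∫ t in (0)..T, (2 : ℝ) • (innerSL ℝ (γ t - x₀)).comp (U t)

theorem quadraticCostDeriv_apply (hT : 0 ≤ T) (hγ : ContinuousOn γ (Icc 0 T))
    (hU : ContinuousOn U (Icc 0 T)) (v : E) :
    quadraticCostDeriv x₀ T γ U v = ∫ t in (0)..T, 2 * ⟪γ t - x₀, U t v⟫ := by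
  rw [← uIcc_of_le hT] at hγ hU
  have integrable : IntervalIntegrable
      (fun t ↦ (2 : ℝ) • (innerSL ℝ (γ t - x₀)).comp (U t)) volume 0 T :=
    ContinuousOn.intervalIntegrable (by fun_prop)
  rw [quadraticCostDeriv, ContinuousLinearMap.intervalIntegral_apply integrable]
  rfl

theorem quadraticCostDeriv_apply_velocity (hT : 0 ≤ T) (hf : HasLipschitzFDerivOn f L K s)
    (hγ : IsIntegralCurveOn γ (fun _ ↦ f) (Icc 0 T)) (hγs : MapsTo γ (Icc 0 T) s)
    (hU : IsFundamentalSolution (fun t ↦ fderiv ℝ f (γ t)) T U) :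
    quadraticCostDeriv x₀ T γ U (f (γ 0)) = ‖γ T - x₀‖ ^ 2 - ‖γ 0 - x₀‖ ^ 2 := by
  have hγc := hγ.continuousOn
  have hfγ : ContinuousOn (fun t ↦ f (γ t)) (Icc 0 T) := fun t ht ↦
    (hf.differentiableAt _ (hγs ht)).continuousAt.comp_continuousWithinAt (hγc t ht)
  have hderiv : ∀ t ∈ Ioo 0 T,
      HasDerivAt (fun t ↦ ‖γ t - x₀‖ ^ 2) (2 * ⟪γ t - x₀, f (γ t)⟫) t := fun t ht ↦
    (((hγ t (Ioo_subset_Icc_self ht)).hasDerivAt (Icc_mem_nhds ht.1 ht.2)).sub_const x₀).norm_sq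
  calc quadraticCostDeriv x₀ T γ U (f (γ 0))
      = ∫ t in (0)..T, 2 * ⟪γ t - x₀, U t (f (γ 0))⟫ :=
        quadraticCostDeriv_apply hT hγc hU.isIntegralCurveOn.continuousOn _
    _ = ∫ t in (0)..T, 2 * ⟪γ t - x₀, f (γ t)⟫ :=
        intervalIntegral.integral_congr fun t ht ↦ by
          rw [uIcc_of_le hT] at ht
          simp only [hU.apply_velocity hf hγ hγs ht]
    _ = ‖γ T - x₀‖ ^ 2 - ‖γ 0 - x₀‖ ^ 2 :=
        intervalIntegral.integral_eq_sub_of_hasDerivAt_of_le hT (by fun_prop) hderiv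
          (ContinuousOn.intervalIntegrable <| by
            rw [uIcc_of_le hT]
            exact continuousOn_const.mul ((hγc.sub continuousOn_const).inner hfγ))

/-- The constant of the quadratic remainder in the first-order expansion of `quadraticCost` along
trajectories of a `C^{1,1}` field that stay within distance `R` of the reference point. -/
noncomputable def quadraticCostModulus (L K : ℝ≥0) (R T : ℝ) : ℝ :=
  (1 + 2 * R * (K * gronwallBound 0 L 1 T)) * Real.exp (L * T) ^ 2 * T

theorem quadraticCostModulus_nonneg (hR : 0 ≤ R) (hT : 0 ≤ T) :
    0 ≤ quadraticCostModulus L K R T := by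
  have := gronwallBound_nonneg le_rfl L.2 zero_le_one hT
  unfold quadraticCostModulus
  positivity

theorem norm_sq_sub_norm_sq_sub_two_inner (a b c : E) :
    ‖b‖ ^ 2 - ‖a‖ ^ 2 - 2 * ⟪a, c⟫ = ‖b - a‖ ^ 2 + 2 * ⟪a, b - a - c⟫ := by
  rw [norm_sub_sq_real, inner_sub_right, inner_sub_right, real_inner_self_eq_norm_sq,
    real_inner_comm a b]
  ring

theorem IsFundamentalSolution.norm_sq_sub_norm_sq_sub_two_inner_le
    (hU : IsFundamentalSolution (fun t ↦ fderiv ℝ f (γ t)) T U)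
    (hf : HasLipschitzFDerivOn f L K s) (hs : Convex ℝ s)
    (hγ : IsIntegralCurveOn γ (fun _ ↦ f) (Icc 0 T)) (hγs : MapsTo γ (Icc 0 T) s)
    (hη : IsIntegralCurveOn η (fun _ ↦ f) (Icc 0 T)) (hηs : MapsTo η (Icc 0 T) s)
    (hγR : ∀ t ∈ Icc 0 T, ‖γ t - x₀‖ ≤ R) {t : ℝ} (ht : t ∈ Icc 0 T) :
    ‖η t - x₀‖ ^ 2 - ‖γ t - x₀‖ ^ 2 - 2 * ⟪γ t - x₀, U t (η 0 - γ 0)⟫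
      ≤ (1 + 2 * R * (K * gronwallBound 0 L 1 T)) * (‖η 0 - γ 0‖ * Real.exp (L * T)) ^ 2 := by
  have hR : 0 ≤ R := (norm_nonneg _).trans (hγR t ht)
  rw [norm_sq_sub_norm_sq_sub_two_inner, sub_sub_sub_cancel_right]
  grw [real_inner_le_norm, hγR t ht, hU.norm_sub_sub_apply_le hf hs hγ hγs hη hηs ht,
    norm_sub_le_mul_exp_of_isIntegralCurveOn (hf.lipschitzOnWith hs) hη hηs hγ hγs ht, ht.2]
  exact le_of_eq (by ring)

theorem quadraticCost_sub_le (hT : 0 ≤ T) (hf : HasLipschitzFDerivOn f L K s) (hs : Convex ℝ s)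
    (hγ : IsIntegralCurveOn γ (fun _ ↦ f) (Icc 0 T)) (hγs : MapsTo γ (Icc 0 T) s)
    (hη : IsIntegralCurveOn η (fun _ ↦ f) (Icc 0 T)) (hηs : MapsTo η (Icc 0 T) s)
    (hU : IsFundamentalSolution (fun t ↦ fderiv ℝ f (γ t)) T U)
    (hγR : ∀ t ∈ Icc 0 T, ‖γ t - x₀‖ ≤ R) :
    quadraticCost x₀ T η - quadraticCost x₀ T γ
      ≤ quadraticCostDeriv x₀ T γ U (η 0 - γ 0)
        + quadraticCostModulus L K R T * ‖η 0 - γ 0‖ ^ 2 := by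
  have hγc := hγ.continuousOn
  have hηc := hη.continuousOn
  have hUc := hU.isIntegralCurveOn.continuousOn
  have integrable : ∀ {g : ℝ → ℝ}, ContinuousOn g (Icc 0 T) → IntervalIntegrable g volume 0 T :=
    fun hg ↦ ContinuousOn.intervalIntegrable (by rwa [uIcc_of_le hT])
  have integral_le := intervalIntegral.integral_mono_on hT (integrable (by fun_prop))
    intervalIntegrable_const
    fun t ht ↦ hU.norm_sq_sub_norm_sq_sub_two_inner_le hf hs hγ hγs hη hηs hγR ht
  rw [intervalIntegral.integral_sub (integrable (by fun_prop)) (integrable (by fun_prop)),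
    intervalIntegral.integral_sub (integrable (by fun_prop)) (integrable (by fun_prop)),
    ← quadraticCostDeriv_apply hT hγc hUc, intervalIntegral.integral_const, sub_zero,
    smul_eq_mul] at integral_le
  unfold quadraticCost quadraticCostModulus
  linarith

end QuadraticCost

section Semiflow

variable {E : Type*} [NormedAddCommGroup E] [NormedSpace ℝ E] {f : E → E} {φ : ℝ → E → E}
  {D : Set E} {L : ℝ≥0} {x x₀ : E}

/-- `φ` is a forward flow of `x' = f x` on the set `D`: for `x ∈ D`, the curve `t ↦ φ t x` is a
trajectory starting at `x` that stays in `D` for all `t ≥ 0`. The values of `φ` at negative times or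
outside `D` are irrelevant. -/
structure IsSemiflowOn (f : E → E) (D : Set E) (φ : ℝ → E → E) : Prop where
  map_zero : ∀ x ∈ D, φ 0 x = x
  map_mem : ∀ x ∈ D, ∀ t, 0 ≤ t → φ t x ∈ D
  isIntegralCurveOn : ∀ x ∈ D, IsIntegralCurveOn (fun t ↦ φ t x) (fun _ ↦ f) (Ici 0)

/-- Local exponential stability of the point `x₀` for a flow `φ` on `D`. -/
def IsLocallyExponentiallyStableOn (φ : ℝ → E → E) (D : Set E) (x₀ : E) : Prop :=
  ∃ ε > 0, ∃ κ > 0, ∃ a > 0, ∀ x ∈ D, ‖x - x₀‖ ≤ ε →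
    ∀ t, 0 ≤ t → ‖φ t x - x₀‖ ≤ κ * ‖x - x₀‖ * Real.exp (-a * t)

namespace IsSemiflowOn

theorem isIntegralCurveOn_Icc (hφ : IsSemiflowOn f D φ) (hx : x ∈ D) (T : ℝ) :
    IsIntegralCurveOn (fun t ↦ φ t x) (fun _ ↦ f) (Icc 0 T) :=
  (hφ.isIntegralCurveOn x hx).mono Icc_subset_Ici_self

theorem mapsTo_Icc (hφ : IsSemiflowOn f D φ) (hx : x ∈ D) (T : ℝ) :
    MapsTo (fun t ↦ φ t x) (Icc 0 T) D :=
  fun t ht ↦ hφ.map_mem x hx t ht.1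

theorem continuousOn (hφ : IsSemiflowOn f D φ) (hf : LipschitzOnWith L f D) {t : ℝ} (ht : 0 ≤ t) :
    ContinuousOn (φ t) D := by
  refine LipschitzOnWith.continuousOn (K := (Real.exp (L * t)).toNNReal) <|
    LipschitzOnWith.of_dist_le_mul fun x hx y hy ↦ ?_
  have := norm_sub_le_mul_exp_of_isIntegralCurveOn hf (hφ.isIntegralCurveOn_Icc hx t)
    (hφ.mapsTo_Icc hx t) (hφ.isIntegralCurveOn_Icc hy t) (hφ.mapsTo_Icc hy t) (right_mem_Icc.2 ht)
  rwa [hφ.map_zero x hx, hφ.map_zero y hy, mul_comm, ← dist_eq_norm, ← dist_eq_norm,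
    ← Real.coe_toNNReal _ (Real.exp_pos _).le] at this

theorem map_add (hφ : IsSemiflowOn f D φ) (hf : LipschitzOnWith L f D) (hx : x ∈ D) {t s : ℝ}
    (ht : 0 ≤ t) (hs : 0 ≤ s) : φ (t + s) x = φ t (φ s x) := by
  have shifted : IsIntegralCurveOn (fun u ↦ φ (u + s) x) (fun _ ↦ f) (Icc 0 t) :=
    ((hφ.isIntegralCurveOn x hx).comp_add s).mono fun u hu ↦
      ⟨u + s, add_nonneg hu.1 hs, by simp⟩
  have hφs := hφ.map_mem x hx s hs
  have := norm_sub_le_mul_exp_of_isIntegralCurveOn hf shifted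
    (fun u hu ↦ hφ.map_mem x hx _ (add_nonneg hu.1 hs))
    (hφ.isIntegralCurveOn_Icc hφs t) (hφ.mapsTo_Icc hφs t) (right_mem_Icc.2 ht)
  rw [hφ.map_zero _ hφs, zero_add, sub_self, norm_zero, zero_mul] at this
  exact sub_eq_zero.1 (norm_le_zero_iff.1 this)

theorem norm_sub_le_mul_exp_of_norm_sub_le (hφ : IsSemiflowOn f D φ) (hf : LipschitzOnWith L f D)
    {ε κ a : ℝ} (hκ : 0 < κ) (ha : 0 < a)
    (hstable : ∀ x ∈ D, ‖x - x₀‖ ≤ ε → ∀ t, 0 ≤ t →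
      ‖φ t x - x₀‖ ≤ κ * ‖x - x₀‖ * Real.exp (-a * t))
    (hx : x ∈ D) {s t : ℝ} (hs : 0 ≤ s) (hst : s ≤ t) (hentry : ‖φ s x - x₀‖ ≤ ε) :
    ‖φ t x - x₀‖ ≤ κ * ‖x - x₀‖ * Real.exp (-a * (t - s)) := by
  rcases le_total ‖x - x₀‖ ε with near | far
  · calc ‖φ t x - x₀‖ ≤ κ * ‖x - x₀‖ * Real.exp (-a * t) := hstable x hx near t (hs.trans hst)
      _ ≤ κ * ‖x - x₀‖ * Real.exp (-a * (t - s)) := by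
        gcongr κ * ‖x - x₀‖ * Real.exp ?_
        nlinarith
  · have := hstable _ (hφ.map_mem x hx s hs) hentry (t - s) (sub_nonneg.2 hst)
    rw [← hφ.map_add hf hx (sub_nonneg.2 hst) hs, sub_add_cancel] at this
    grw [this, hentry, far]

theorem eventually_forall_norm_sub_le_mul (hφ : IsSemiflowOn f D φ) (hf : LipschitzOnWith L f D)
    (hD : IsCompact D) (hattract : ∀ x ∈ D, Tendsto (fun t ↦ φ t x) atTop (𝓝 x₀))
    (hstable : IsLocallyExponentiallyStableOn φ D x₀) {r : ℝ} (hr : 0 < r) :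
    ∀ᶠ t in atTop, ∀ x ∈ D, ‖φ t x - x₀‖ ≤ r * ‖x - x₀‖ := by
  obtain ⟨ε, hε, κ, hκ, a, ha, hstable⟩ := hstable
  have decay : ∀ s : ℝ, ∀ᶠ t in atTop, κ * Real.exp (-a * (t - s)) ≤ r := fun s ↦ by
    have : Tendsto (fun t ↦ κ * Real.exp (-a * (t - s))) atTop (𝓝 (κ * 0)) :=
      (Real.tendsto_exp_atBot.comp ((tendsto_id.atTop_add tendsto_const_nhds).const_mul_atTop_of_neg
        (neg_neg_of_pos ha))).const_mul κ
    rw [mul_zero] at this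
    exact this.eventually_le_const hr
  refine hD.induction_on (p := fun A ↦ ∀ᶠ t in atTop, ∀ x ∈ A, ‖φ t x - x₀‖ ≤ r * ‖x - x₀‖)
    (by simp) (fun A B hAB hB ↦ hB.mono fun t ht x hx ↦ ht x (hAB hx))
    (fun A B hA hB ↦ ?_) fun x hx ↦ ?_
  · filter_upwards [hA, hB] with t hAt hBt x hx using hx.elim (hAt x) (hBt x)
  · obtain ⟨s, hs, hxs⟩ : ∃ s, 0 ≤ s ∧ ‖φ s x - x₀‖ < ε :=
      ((eventually_ge_atTop 0).and
        ((tendsto_iff_norm_sub_tendsto_zero.1 (hattract x hx)).eventually_lt_const hε)).exists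
    have entry : ∀ᶠ y in 𝓝[D] x, ‖φ s y - x₀‖ < ε :=
      ((hφ.continuousOn hf hs x hx).sub_const x₀).norm.eventually_lt_const hxs
    refine ⟨_, inter_mem entry self_mem_nhdsWithin, ?_⟩
    filter_upwards [decay s, eventually_ge_atTop s] with t hdecay hst y ⟨hy, hyD⟩
    calc ‖φ t y - x₀‖ ≤ κ * ‖y - x₀‖ * Real.exp (-a * (t - s)) :=
          hφ.norm_sub_le_mul_exp_of_norm_sub_le hf hκ ha hstable hyD hs hst (le_of_lt hy)
      _ = κ * Real.exp (-a * (t - s)) * ‖y - x₀‖ := by ring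
      _ ≤ r * ‖y - x₀‖ := by gcongr

end IsSemiflowOn

end Semiflow

section Lyapunov

/-- `V` is a Lyapunov function for `x' = f x` on `D`, with dissipation `W`, that is semiconcave with
constant `K`: at each `x ∈ D` it lies below a paraboloid with linear part `p` touching it at `x`,
and `p` certifies the decay of `V` along the field. No differentiability of `V` is assumed. -/
def IsSemiconcaveLyapunovOn {E : Type*} [NormedAddCommGroup E] [NormedSpace ℝ E]
    (f : E → E) (D : Set E) (W : E → ℝ) (K : ℝ) (V : E → ℝ) : Prop :=
  ∀ x ∈ D, ∃ p : E →L[ℝ] ℝ, p (f x) ≤ -W x ∧ ∀ y ∈ D, V y - V x ≤ p (y - x) + K * ‖y - x‖ ^ 2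

variable {E : Type*} [NormedAddCommGroup E] [InnerProductSpace ℝ E] [CompleteSpace E]
  {f : E → E} {φ : ℝ → E → E} {D : Set E} {x₀ : E}

theorem IsSemiflowOn.isSemiconcaveLyapunovOn_quadraticCost (hφ : IsSemiflowOn f D φ)
    {L K : ℝ≥0} {s : Set E} (hf : HasLipschitzFDerivOn f L K s) (hs : Convex ℝ s) (hDs : D ⊆ s)
    {R T : ℝ} (hDR : D ⊆ Metric.closedBall x₀ R) (hT : 0 ≤ T)
    (hcontract : ∀ x ∈ D, ‖φ T x - x₀‖ ≤ 1 / 2 * ‖x - x₀‖) :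
    IsSemiconcaveLyapunovOn f D (fun x ↦ 1 / 2 * ‖x - x₀‖ ^ 2) (quadraticCostModulus L K R T)
      (fun x ↦ quadraticCost x₀ T (fun t ↦ φ t x)) := by
  intro x hx
  have hcurve := fun {y} (hy : y ∈ D) ↦ hφ.isIntegralCurveOn_Icc hy T
  have hmaps := fun {y} (hy : y ∈ D) ↦ (hφ.mapsTo_Icc hy T).mono_right hDs
  obtain ⟨U, hU⟩ := exists_isFundamentalSolution_fderiv hf hT (hcurve hx).continuousOn (hmaps hx)
  refine ⟨quadraticCostDeriv x₀ T (fun t ↦ φ t x) U, ?_, fun y hy ↦ ?_⟩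
  · have velocity := quadraticCostDeriv_apply_velocity (x₀ := x₀) hT hf (hcurve hx) (hmaps hx) hU
    rw [hφ.map_zero x hx] at velocity
    rw [velocity]
    grw [hcontract x hx]
    nlinarith [sq_nonneg ‖x - x₀‖]
  · have expansion := quadraticCost_sub_le hT hf hs (hcurve hx) (hmaps hx) (hcurve hy) (hmaps hy) hU
      fun t ht ↦ mem_closedBall_iff_norm.1 (hDR (hφ.mapsTo_Icc hx T ht))
    rwa [hφ.map_zero x hx, hφ.map_zero y hy] at expansion

theorem IsSemiflowOn.exists_isSemiconcaveLyapunovOn (hφ : IsSemiflowOn f D φ) (hD : IsCompact D)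
    (hf : Differentiable ℝ f) (hf' : LocallyLipschitz (fderiv ℝ f))
    (hattract : ∀ x ∈ D, Tendsto (fun t ↦ φ t x) atTop (𝓝 x₀))
    (hstable : IsLocallyExponentiallyStableOn φ D x₀) :
    ∃ K ≥ 0, ∃ V, IsSemiconcaveLyapunovOn f D (fun x ↦ 1 / 2 * ‖x - x₀‖ ^ 2) K V := by
  obtain ⟨L, K, hfLK⟩ :=
    exists_hasLipschitzFDerivOn_of_isCompact hf hf' (isCompact_closedConvexHull hD)
  have hDs : D ⊆ closedConvexHull ℝ D := subset_closedConvexHull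
  have hlip : LipschitzOnWith L f D := (hfLK.lipschitzOnWith convex_closedConvexHull).mono hDs
  obtain ⟨R, hR, hDR⟩ := hD.isBounded.subset_closedBall_lt 0 x₀
  obtain ⟨T, hT, hcontract⟩ := ((eventually_ge_atTop 0).and
    (hφ.eventually_forall_norm_sub_le_mul hlip hD hattract hstable one_half_pos)).exists
  exact ⟨_, quadraticCostModulus_nonneg hR.le hT, _, hφ.isSemiconcaveLyapunovOn_quadraticCost
    hfLK convex_closedConvexHull hDs hDR hT hcontract⟩

end Lyapunov

section MarkovChain

variable {E : Type*} [DecidableEq E]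

/-- The generator, applied to `h`, of the continuous-time Markov chain on `S` with rates `Q`. -/
def jumpGenerator (S : Finset E) (Q : E → E → ℝ) (h : E → ℝ) (x : E) : ℝ :=
  ∑ y ∈ S.erase x, Q x y * (h y - h x)

/-- The total rate at which the continuous-time Markov chain on `S` with rates `Q` leaves `x`. -/
def jumpRate (S : Finset E) (Q : E → E → ℝ) (x : E) : ℝ := ∑ y ∈ S.erase x, Q x y

variable [NormedAddCommGroup E] [NormedSpace ℝ E]

/-- The mean velocity at `x` of the continuous-time Markov chain on `S` with rates `Q`. -/
def jumpDrift (S : Finset E) (Q : E → E → ℝ) (x : E) : E := ∑ y ∈ S.erase x, Q x y • (y - x)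

variable {f : E → E} {D : Set E} {W V : E → ℝ} {K δ : ℝ} {S : Finset E} {Q : E → E → ℝ} {x : E}

theorem IsSemiconcaveLyapunovOn.jumpGenerator_le (hV : IsSemiconcaveLyapunovOn f D W K V)
    (hK : 0 ≤ K) (hS : ∀ x ∈ S, x ∈ D) (hQ : ∀ y ∈ S, 0 ≤ Q x y)
    (hjump : ∀ y ∈ S, 0 < Q x y → ‖y - x‖ ≤ δ) (hdrift : f x = jumpDrift S Q x) (hx : x ∈ S) :
    jumpGenerator S Q V x ≤ -W x + K * δ ^ 2 * jumpRate S Q x := by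
  obtain ⟨p, hpW, hpV⟩ := hV x (hS x hx)
  have jump_le : ∀ y ∈ S, Q x y * (V y - V x) ≤ Q x y * p (y - x) + K * δ ^ 2 * Q x y := by
    intro y hy
    rcases (hQ y hy).eq_or_lt with hzero | hpos
    · simp [← hzero]
    · grw [hpV y (hS y hy), hjump y hy hpos]
      exact le_of_eq (by ring)
  calc jumpGenerator S Q V x
      ≤ ∑ y ∈ S.erase x, (Q x y * p (y - x) + K * δ ^ 2 * Q x y) :=
        Finset.sum_le_sum fun y hy ↦ jump_le y (Finset.mem_of_mem_erase hy)
    _ = p (f x) + K * δ ^ 2 * jumpRate S Q x := by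
        simp only [hdrift, jumpDrift, jumpRate, map_sum, map_smul, smul_eq_mul,
          Finset.sum_add_distrib, Finset.mul_sum]
    _ ≤ -W x + K * δ ^ 2 * jumpRate S Q x := by gcongr

theorem IsSemiconcaveLyapunovOn.sum_mul_le_of_stationary
    (hV : IsSemiconcaveLyapunovOn f D W K V) (hK : 0 ≤ K) (hS : ∀ x ∈ S, x ∈ D)
    (hQ : ∀ x ∈ S, ∀ y ∈ S, 0 ≤ Q x y) (hjump : ∀ x ∈ S, ∀ y ∈ S, 0 < Q x y → ‖y - x‖ ≤ δ)
    (hdrift : ∀ x ∈ S, f x = jumpDrift S Q x) {π : E → ℝ} (hπ : ∀ x ∈ S, 0 ≤ π x)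
    (hstat : ∑ x ∈ S, π x * jumpGenerator S Q V x = 0) :
    ∑ x ∈ S, π x * W x ≤ K * δ ^ 2 * ∑ x ∈ S, π x * jumpRate S Q x := by
  have := calc
    0 = ∑ x ∈ S, π x * jumpGenerator S Q V x := hstat.symm
    _ ≤ ∑ x ∈ S, π x * (-W x + K * δ ^ 2 * jumpRate S Q x) := by
        gcongr with x hx
        · exact hπ x hx
        · exact hV.jumpGenerator_le hK hS (hQ x hx) (hjump x hx) (hdrift x hx) hx
    _ = K * δ ^ 2 * ∑ x ∈ S, π x * jumpRate S Q x - ∑ x ∈ S, π x * W x := by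
        rw [Finset.mul_sum, ← Finset.sum_sub_distrib]
        exact Finset.sum_congr rfl fun x _ ↦ by ring
  linarith

end MarkovChain

theorem meanfield_rate_of_convergence_general {E : Type*} [NormedAddCommGroup E]
    [InnerProductSpace ℝ E] [CompleteSpace E] [DecidableEq E] {D : Set E} (hD : IsCompact D)
    {f : E → E} (hf : Differentiable ℝ f) (hf' : LocallyLipschitz (fderiv ℝ f)) {φ : ℝ → E → E}
    (hφ : IsSemiflowOn f D φ) {x₀ : E}
    (hattract : ∀ x ∈ D, Tendsto (fun t ↦ φ t x) atTop (𝓝 x₀))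
    (hstable : IsLocallyExponentiallyStableOn φ D x₀)
    {S : ℕ → Finset E} (hS : ∀ M ≥ 1, ∀ x ∈ S M, x ∈ D)
    {q : ℕ → E → E → ℝ} (hq : ∀ M ≥ 1, ∀ x ∈ S M, ∀ y ∈ S M, 0 ≤ q M x y)
    {π : ℕ → E → ℝ} (hπ : ∀ M ≥ 1, ∀ x ∈ S M, 0 ≤ π M x)
    (hstat : ∀ M ≥ 1, ∀ h : E → ℝ,
      ∑ x ∈ S M, π M x * jumpGenerator (S M) (fun x y ↦ M * q M x y) h x = 0)
    {c : ℝ} (hrate : ∀ M ≥ 1, ∑ x ∈ S M, π M x * jumpRate (S M) (q M) x ≤ c)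
    {c' : ℝ} (hjump : ∀ M ≥ 1, ∀ x ∈ S M, ∀ y ∈ S M, 0 < q M x y → ‖y - x‖ ≤ c' / M)
    (hdrift : ∀ M ≥ 1, ∀ x ∈ S M, f x = (M : ℝ) • jumpDrift (S M) (q M) x) :
    ∃ C > 0, ∀ M ≥ 1, ∑ x ∈ S M, π M x * ‖x - x₀‖ ^ 2 ≤ C / M := by
  obtain ⟨K, hK, V, hV⟩ := hφ.exists_isSemiconcaveLyapunovOn hD hf hf' hattract hstable
  refine ⟨2 * K * c' ^ 2 * |c| + 1, by positivity, fun M hM ↦ ?_⟩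
  have hM' : (0 : ℝ) < M := by exact_mod_cast hM
  have bound := hV.sum_mul_le_of_stationary (Q := fun x y ↦ M * q M x y) hK (hS M hM)
    (fun x hx y hy ↦ mul_nonneg hM'.le (hq M hM x hx y hy))
    (fun x hx y hy hpos ↦ hjump M hM x hx y hy (pos_of_mul_pos_right hpos hM'.le))
    (fun x hx ↦ by
      rw [hdrift M hM x hx, jumpDrift, Finset.smul_sum]
      simp only [jumpDrift, mul_smul])
    (hπ M hM) (hstat M hM V)
  have rate_eq : ∑ x ∈ S M, π M x * jumpRate (S M) (fun x y ↦ M * q M x y) x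
      = M * ∑ x ∈ S M, π M x * jumpRate (S M) (q M) x := by
    simp only [jumpRate, ← Finset.mul_sum, mul_left_comm _ (M : ℝ)]
  calc ∑ x ∈ S M, π M x * ‖x - x₀‖ ^ 2
      = 2 * ∑ x ∈ S M, π M x * (1 / 2 * ‖x - x₀‖ ^ 2) := by
        rw [Finset.mul_sum]
        exact Finset.sum_congr rfl fun x _ ↦ by ring
    _ ≤ 2 * (K * (c' / M) ^ 2 * (M * |c|)) := by
        grw [bound, rate_eq, hrate M hM, le_abs_self c]
    _ = 2 * K * c' ^ 2 * |c| / M := by field_simp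
    _ ≤ (2 * K * c' ^ 2 * |c| + 1) / M := by gcongr; linarith

/-- For a family of CTMCs whose mean-field model is perfect, with
bounded transition rates and bounded state transitions, if the mean-field model is
globally asymptotically stable and locally exponentially stable, then the stationary
distributions converge to the equilibrium point in the mean-square sense with rate `1/M`. -/
theorem meanfield_rate_of_convergence
    (n : ℕ) (hn : 1 ≤ n)
    (D : Set (EuclideanSpace ℝ (Fin n)))
    (hDcompact : IsCompact D)
    (hDsub : ∀ x ∈ D, ∀ i, x i ∈ Set.Icc (0 : ℝ) 1)
    (f : EuclideanSpace ℝ (Fin n) → EuclideanSpace ℝ (Fin n))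
    (hf : ContDiff ℝ 2 f)
    (φ : ℝ → EuclideanSpace ℝ (Fin n) → EuclideanSpace ℝ (Fin n))
    (hφ0 : ∀ x ∈ D, φ 0 x = x)
    (hφD : ∀ x ∈ D, ∀ t : ℝ, 0 ≤ t → φ t x ∈ D)
    (hφderiv : ∀ x ∈ D, ∀ t : ℝ, 0 ≤ t →
      HasDerivAt (fun s => φ s x) (f (φ t x)) t)
    (xstar : EuclideanSpace ℝ (Fin n)) (hxstarD : xstar ∈ D)
    (hfix : f xstar = 0)
    (huniq : ∀ x ∈ D, f x = 0 → x = xstar)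
    -- global asymptotic stability
    (hGAS : ∀ x ∈ D, Tendsto (fun t => φ t x) atTop (nhds xstar))
    -- local exponential stability
    (hLES : ∃ ε > (0 : ℝ), ∃ κ > (0 : ℝ), ∃ a > (0 : ℝ), ∀ x ∈ D, ‖x - xstar‖ ≤ ε →
      ∀ t : ℝ, 0 ≤ t → ‖φ t x - xstar‖ ≤ κ * ‖x - xstar‖ * Real.exp (-a * t))
    -- the family of CTMCs
    (S : ℕ → Finset (EuclideanSpace ℝ (Fin n)))
    (hS : ∀ M ≥ 1, ∀ x ∈ S M, x ∈ D)
    (q : ℕ → EuclideanSpace ℝ (Fin n) → EuclideanSpace ℝ (Fin n) → ℝ)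
    (hq0 : ∀ M ≥ 1, ∀ x y, 0 ≤ q M x y)
    (hqdiag : ∀ M ≥ 1, ∀ x, q M x x = 0)
    (pr : ℕ → EuclideanSpace ℝ (Fin n) → ℝ)
    (hpr01 : ∀ M ≥ 1, ∀ x ∈ S M, 0 ≤ pr M x ∧ pr M x ≤ 1)
    (hpr1 : ∀ M ≥ 1, ∑ x ∈ S M, pr M x = 1)
    -- stationarity for the CTMC with rates `Q_M(x,y) = M q_M(x,y)`
    (hstat : ∀ M ≥ 1, ∀ h : EuclideanSpace ℝ (Fin n) → ℝ,
      ∑ x ∈ S M, pr M x * ∑ y ∈ (S M).erase x, (M : ℝ) * q M x y * (h y - h x) = 0)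
    -- (i) bounded transition rates
    (c : ℝ) (hc : 0 < c)
    (hrate : ∀ M ≥ 1, ∑ x ∈ S M, pr M x * ∑ y ∈ (S M).erase x, q M x y ≤ c)
    -- (ii) bounded state transitions
    (ctilde : ℝ) (hctilde : 0 < ctilde)
    (hjump : ∀ M ≥ 1, ∀ x ∈ S M, ∀ y ∈ S M, 0 < q M x y → ‖y - x‖ ≤ ctilde / M)
    -- (iii) perfect mean-field model
    (hperfect : ∀ M ≥ 1, ∀ x ∈ S M,
      f x = (M : ℝ) • ∑ y ∈ (S M).erase x, q M x y • (y - x)) :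
    ∃ C > (0 : ℝ), ∃ M₀ : ℕ, ∀ M ≥ M₀,
      ∑ x ∈ S M, pr M x * ‖x - xstar‖ ^ 2 ≤ C / M := by
  obtain ⟨C, hC, hbound⟩ := meanfield_rate_of_convergence_general hDcompact
    (hf.differentiable two_ne_zero) (hf.fderiv_right (m := 1) (by norm_num)).locallyLipschitz
    ⟨hφ0, hφD, fun x hx t ht ↦ (hφderiv x hx t ht).hasDerivWithinAt⟩ hGAS hLES hS
    (fun M hM x _ y _ ↦ hq0 M hM x y) (fun M hM x hx ↦ (hpr01 M hM x hx).1)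
    hstat hrate hjump hperfect
  exact ⟨C, hC, 1, hbound⟩
end

section
/- Let D ⊆ [0,1]^n be compact, f : ℝ^n → ℝ^n a vector field with f(0) = 0 whose Jacobian matrix Df is Lipschitz with constant L, and φ : [0,∞) × D → D a flow with ∂φ/∂t(t,x) = f(φ(t,x)), φ(0,x) = x, that is globally exponentially stable with equilibrium 0: there exist κ, α > 0 with ‖φ(t,x)‖ ≤ κ‖x‖e^{−αt} for all x ∈ D, t ≥ 0. Let P be a real symmetric positive definite n×n matrix satisfying 2 yᵀP·Df(0)·y ≤ −‖y‖² for all y ∈ ℝ^n, with smallest and largest eigenvalues λ_min(P) and λ_max(P). Fix x ∈ D and z ∈ ℝ^n, and let x¹ : [0,∞) → ℝ^n solve the first-order (variational) system ẋ¹(t) = Df(φ(t,x))·x¹(t) with x¹(0) = z. Then for all t ≥ 0: ‖x¹(t)‖² ≤ (zᵀPz / λ_min(P)) · exp( 2λ_max(P)·L·κ·‖x‖ / (α·λ_min(P)) ) · exp( −t / λ_max(P) ). In particular, the first-order system is exponentially stable. -/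
open Filter MeasureTheory Matrix

/-!
The Lyapunov function `V y = ⟪y, P y⟫` is comparable to `‖y‖²`. Along the variational system, the
linearization at the origin contributes at most `-‖y‖² ≤ -V / λ_max` to its derivative, and the
Lipschitz bound on `Df` makes the deviation of `Df (φ t x)` from `Df 0` an exponentially decaying
relative perturbation of the decay rate of `V`. Such a perturbation has a finite integral, so it
costs only a constant factor.
-/

open Set
open scoped RealInnerProductSpace

theorem le_mul_exp_of_hasDerivWithinAt_le {V V' g g' : ℝ → ℝ} {t₀ t : ℝ}
    (hV : ∀ s ∈ Ici t₀, HasDerivWithinAt V (V' s) (Ici t₀) s)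
    (hg : ∀ s ∈ Ici t₀, HasDerivWithinAt g (g' s) (Ici t₀) s)
    (hle : ∀ s ∈ Ioi t₀, V' s ≤ g' s * V s) (ht : t₀ ≤ t) :
    V t ≤ V t₀ * Real.exp (g t - g t₀) := by
  have hderiv (s : ℝ) (hs : s ∈ Ici t₀) :
      HasDerivWithinAt (fun s ↦ V s * Real.exp (-g s))
        ((V' s - g' s * V s) * Real.exp (-g s)) (Ici t₀) s :=
    ((hV s hs).mul (hg s hs).fun_neg.exp).congr_deriv (by ring)
  have hanti : AntitoneOn (fun s ↦ V s * Real.exp (-g s)) (Ici t₀) := by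
    refine antitoneOn_of_hasDerivWithinAt_nonpos (convex_Ici t₀)
      (fun s hs ↦ (hderiv s hs).continuousWithinAt)
      (fun s hs ↦ (hderiv s (interior_subset hs)).mono interior_subset) fun s hs ↦ ?_
    rw [interior_Ici] at hs
    exact mul_nonpos_of_nonpos_of_nonneg (sub_nonpos.2 (hle s hs)) (Real.exp_pos _).le
  calc V t = V t * Real.exp (-g t) * Real.exp (g t) := by
        rw [mul_assoc, ← Real.exp_add, neg_add_cancel, Real.exp_zero, mul_one]
    _ ≤ V t₀ * Real.exp (-g t₀) * Real.exp (g t) :=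
        mul_le_mul_of_nonneg_right (hanti self_mem_Ici ht ht) (Real.exp_pos _).le
    _ = V t₀ * Real.exp (g t - g t₀) := by
        rw [mul_assoc, ← Real.exp_add, neg_add_eq_sub]

theorem hasDerivAt_neg_div_mul_exp {a : ℝ} (ha : a ≠ 0) (c t : ℝ) :
    HasDerivAt (fun t ↦ -(c / a) * Real.exp (-a * t)) (c * Real.exp (-a * t)) t :=
  (((hasDerivAt_id t).const_mul (-a)).exp.const_mul (-(c / a))).congr_deriv (by
    rw [id, mul_one]
    field_simp)

section InnerProductSpace

variable {E : Type*} [NormedAddCommGroup E] [InnerProductSpace ℝ E] {T : E →L[ℝ] E}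

theorem hasDerivWithinAt_inner_apply_self (hT : T.IsSymmetric) {u : ℝ → E} {u' : E}
    {s : Set ℝ} {t : ℝ} (hu : HasDerivWithinAt u u' s t) :
    HasDerivWithinAt (fun t ↦ ⟪u t, T (u t)⟫) (2 * ⟪u t, T u'⟫) s t := by
  refine (hu.inner ℝ (T.hasFDerivAt.comp_hasDerivWithinAt t hu)).congr_deriv ?_
  rw [Function.comp_apply, ← hT.apply_clm, real_inner_comm, ← two_mul]

theorem opNorm_le_of_abs_inner_apply_self_le (hT : T.IsSymmetric) {M : ℝ} (hM : 0 ≤ M)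
    (hle : ∀ y, |⟪y, T y⟫| ≤ M * ‖y‖ ^ 2) : ‖T‖ ≤ M := by
  rw [T.norm_eq_iSup_rayleighQuotient hT]
  refine ciSup_le fun y ↦ ?_
  rw [ContinuousLinearMap.rayleighQuotient, T.reApplyInnerSelf_apply, abs_div, abs_sq,
    RCLike.re_to_real, real_inner_comm]
  exact div_le_of_le_mul₀ (sq_nonneg _) hM (hle y)

theorem inner_apply_apply_le_add_opNorm_sub (T A B : E →L[ℝ] E) (y : E) :
    ⟪y, T (B y)⟫ ≤ ⟪y, T (A y)⟫ + ‖T‖ * ‖B - A‖ * ‖y‖ ^ 2 := by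
  have hpert : ⟪y, T ((B - A) y)⟫ ≤ ‖T‖ * ‖B - A‖ * ‖y‖ ^ 2 := by
    calc ⟪y, T ((B - A) y)⟫ ≤ ‖y‖ * ‖T ((B - A) y)‖ := real_inner_le_norm _ _
      _ ≤ ‖y‖ * (‖T‖ * (‖B - A‖ * ‖y‖)) := by
          gcongr
          exact T.le_opNorm_of_le ((B - A).le_opNorm y)
      _ = ‖T‖ * ‖B - A‖ * ‖y‖ ^ 2 := by ring
  rw [_root_.sub_apply, map_sub, inner_sub_right] at hpert
  linarith

/-- `T` defines a Lyapunov function `y ↦ ⟪y, T y⟫` for the linear system `u' = A u`, normalized so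
that it decays at rate at least `‖y‖²`; `m` and `M` bound the quadratic form of `T` relative to
`‖y‖²` and play the roles of `λ_min(P)` and `λ_max(P)`. On the trivial space it is `m ≤ M` that
keeps `M` positive. -/
structure IsLyapunovOperator (T A : E →L[ℝ] E) (m M : ℝ) : Prop where
  isSymmetric : T.IsSymmetric
  lower_pos : 0 < m
  lower_le_upper : m ≤ M
  lower_bound : ∀ y, m * ‖y‖ ^ 2 ≤ ⟪y, T y⟫
  upper_bound : ∀ y, ⟪y, T y⟫ ≤ M * ‖y‖ ^ 2
  decay : ∀ y, 2 * ⟪y, T (A y)⟫ ≤ -‖y‖ ^ 2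

namespace IsLyapunovOperator

variable {A : E →L[ℝ] E} {m M : ℝ}

theorem upper_pos (hT : IsLyapunovOperator T A m M) : 0 < M :=
  hT.lower_pos.trans_le hT.lower_le_upper

theorem inner_apply_self_nonneg (hT : IsLyapunovOperator T A m M) (y : E) : 0 ≤ ⟪y, T y⟫ :=
  (mul_nonneg hT.lower_pos.le (sq_nonneg ‖y‖)).trans (hT.lower_bound y)

theorem opNorm_le (hT : IsLyapunovOperator T A m M) : ‖T‖ ≤ M :=
  opNorm_le_of_abs_inner_apply_self_le hT.isSymmetric hT.upper_pos.le fun y ↦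
    (abs_of_nonneg (hT.inner_apply_self_nonneg y)).trans_le (hT.upper_bound y)

theorem norm_sq_le_inner_apply_self_div (hT : IsLyapunovOperator T A m M) (y : E) :
    ‖y‖ ^ 2 ≤ ⟪y, T y⟫ / m :=
  (le_div_iff₀' hT.lower_pos).2 (hT.lower_bound y)

theorem inner_apply_self_div_le_norm_sq (hT : IsLyapunovOperator T A m M) (y : E) :
    ⟪y, T y⟫ / M ≤ ‖y‖ ^ 2 :=
  (div_le_iff₀' hT.upper_pos).2 (hT.upper_bound y)

theorem two_mul_inner_apply_apply_le (hT : IsLyapunovOperator T A m M) {B : E →L[ℝ] E} {ε : ℝ}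
    (hB : ‖B - A‖ ≤ ε) (y : E) :
    2 * ⟪y, T (B y)⟫ ≤ (-1 / M + 2 * M / m * ε) * ⟪y, T y⟫ := by
  have hM : 0 ≤ M := hT.upper_pos.le
  have hε : 0 ≤ ε := (norm_nonneg _).trans hB
  calc 2 * ⟪y, T (B y)⟫ ≤ 2 * ⟪y, T (A y)⟫ + 2 * (‖T‖ * ‖B - A‖ * ‖y‖ ^ 2) := by
        linarith [inner_apply_apply_le_add_opNorm_sub T A B y]
    _ ≤ -‖y‖ ^ 2 + 2 * (M * ε * ‖y‖ ^ 2) := by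
        gcongr
        exacts [hT.decay y, hT.opNorm_le]
    _ ≤ -(⟪y, T y⟫ / M) + 2 * (M * ε * (⟪y, T y⟫ / m)) := by
        gcongr
        exacts [hT.inner_apply_self_div_le_norm_sq y, hT.norm_sq_le_inner_apply_self_div y]
    _ = (-1 / M + 2 * M / m * ε) * ⟪y, T y⟫ := by ring

theorem inner_apply_self_le_mul_exp (hT : IsLyapunovOperator T A m M) {B : ℝ → E →L[ℝ] E}
    {G ε : ℝ → ℝ} {t₀ t : ℝ} (hB : ∀ s ∈ Ioi t₀, ‖B s - A‖ ≤ ε s)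
    (hG : ∀ s ∈ Ici t₀, HasDerivWithinAt G (ε s) (Ici t₀) s)
    {u : ℝ → E} (hu : ∀ s ∈ Ici t₀, HasDerivWithinAt u (B s (u s)) (Ici t₀) s) (ht : t₀ ≤ t) :
    ⟪u t, T (u t)⟫ ≤
      ⟪u t₀, T (u t₀)⟫ * Real.exp (2 * M / m * (G t - G t₀) - (t - t₀) / M) := by
  have hrate (s : ℝ) (hs : s ∈ Ici t₀) :
      HasDerivWithinAt (fun s ↦ -s / M + 2 * M / m * G s) (-1 / M + 2 * M / m * ε s)
        (Ici t₀) s :=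
    ((hasDerivWithinAt_id s _).fun_neg.div_const M).add ((hG s hs).const_mul _)
  convert le_mul_exp_of_hasDerivWithinAt_le
    (fun s hs ↦ hasDerivWithinAt_inner_apply_self hT.isSymmetric (hu s hs)) hrate
    (fun s hs ↦ hT.two_mul_inner_apply_apply_le (hB s hs) (u s)) ht using 3
  ring

theorem norm_sq_le_mul_exp (hT : IsLyapunovOperator T A m M) {B : ℝ → E →L[ℝ] E} {a c : ℝ}
    (ha : 0 < a) (hB : ∀ t, 0 ≤ t → ‖B t - A‖ ≤ c * Real.exp (-a * t))
    {u : ℝ → E} (hu : ∀ t, 0 ≤ t → HasDerivWithinAt u (B t (u t)) (Ici 0) t)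
    {t : ℝ} (ht : 0 ≤ t) :
    ‖u t‖ ^ 2 ≤
      ⟪u 0, T (u 0)⟫ / m * Real.exp (2 * M * c / (a * m)) * Real.exp (-t / M) := by
  have hm : 0 < m := hT.lower_pos
  have hM : 0 < M := hT.upper_pos
  have hc : 0 ≤ c := by simpa using (norm_nonneg _).trans (hB 0 le_rfl)
  have hdecay := hT.inner_apply_self_le_mul_exp (fun s hs ↦ hB s (mem_Ioi.1 hs).le)
    (fun s _ ↦ (hasDerivAt_neg_div_mul_exp ha.ne' c s).hasDerivWithinAt) hu ht
  have hexponent : 2 * M / m * (-(c / a) * Real.exp (-a * t) - -(c / a) * Real.exp (-a * 0)) -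
      (t - 0) / M ≤ 2 * M * c / (a * m) + -t / M := by
    have hnonneg : 0 ≤ 2 * M / m * (c / a) * Real.exp (-a * t) := by positivity
    have hsplit : 2 * M * c / (a * m) = 2 * M / m * (c / a) := by field_simp
    rw [hsplit, mul_zero, Real.exp_zero, neg_div, sub_zero]
    linarith
  calc ‖u t‖ ^ 2 ≤ ⟪u t, T (u t)⟫ / m := hT.norm_sq_le_inner_apply_self_div (u t)
    _ ≤ ⟪u 0, T (u 0)⟫ * Real.exp (2 * M * c / (a * m) + -t / M) / m := by
        gcongr
        refine hdecay.trans ?_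
        gcongr
        exact hT.inner_apply_self_nonneg (u 0)
    _ = ⟪u 0, T (u 0)⟫ / m * Real.exp (2 * M * c / (a * m)) * Real.exp (-t / M) := by
        rw [Real.exp_add]
        ring

end IsLyapunovOperator

end InnerProductSpace

section Matrix

variable {ι : Type*} [Fintype ι] [DecidableEq ι] {P : Matrix ι ι ℝ}

open scoped MatrixOrder in
theorem inner_toEuclideanCLM_le_of_le {Q : Matrix ι ι ℝ} (hPQ : P ≤ Q) (y : EuclideanSpace ℝ ι) :
    ⟪y, toEuclideanCLM (𝕜 := ℝ) P y⟫ ≤ ⟪y, toEuclideanCLM (𝕜 := ℝ) Q y⟫ := by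
  have hnonneg := (le_iff.1 hPQ).dotProduct_mulVec_nonneg y
  rwa [star_trivial, sub_mulVec, dotProduct_sub, sub_nonneg, ← inner_toEuclideanCLM,
    ← inner_toEuclideanCLM] at hnonneg

theorem inner_toEuclideanCLM_algebraMap (r : ℝ) (y : EuclideanSpace ℝ ι) :
    ⟪y, toEuclideanCLM (𝕜 := ℝ) (algebraMap ℝ (Matrix ι ι ℝ) r) y⟫ = r * ‖y‖ ^ 2 := by
  rw [AlgHomClass.commutes, ContinuousLinearMap.algebraMap_apply, real_inner_smul_right,
    real_inner_self_eq_norm_sq]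

open scoped MatrixOrder in
theorem mul_norm_sq_le_inner_toEuclideanCLM (hP : P.IsHermitian) {m : ℝ}
    (hm : m ∈ lowerBounds (range hP.eigenvalues)) (y : EuclideanSpace ℝ ι) :
    m * ‖y‖ ^ 2 ≤ ⟪y, toEuclideanCLM (𝕜 := ℝ) P y⟫ := by
  rw [← hP.spectrum_real_eq_range_eigenvalues] at hm
  rw [← inner_toEuclideanCLM_algebraMap]
  exact inner_toEuclideanCLM_le_of_le ((algebraMap_le_iff_le_spectrum hP).2 hm) y

open scoped MatrixOrder in
theorem inner_toEuclideanCLM_le_mul_norm_sq (hP : P.IsHermitian) {M : ℝ}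
    (hM : M ∈ upperBounds (range hP.eigenvalues)) (y : EuclideanSpace ℝ ι) :
    ⟪y, toEuclideanCLM (𝕜 := ℝ) P y⟫ ≤ M * ‖y‖ ^ 2 := by
  rw [← hP.spectrum_real_eq_range_eigenvalues] at hM
  rw [← inner_toEuclideanCLM_algebraMap]
  exact inner_toEuclideanCLM_le_of_le ((le_algebraMap_iff_spectrum_le hP).2 hM) y

theorem isLyapunovOperator_toEuclideanCLM (hP : P.PosDef) {m M : ℝ}
    (hm : IsLeast (range hP.isHermitian.eigenvalues) m)
    (hM : IsGreatest (range hP.isHermitian.eigenvalues) M)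
    {A : EuclideanSpace ℝ ι →L[ℝ] EuclideanSpace ℝ ι}
    (hA : ∀ y : EuclideanSpace ℝ ι, 2 * (y ⬝ᵥ P *ᵥ A y) ≤ -‖y‖ ^ 2) :
    IsLyapunovOperator (toEuclideanCLM (𝕜 := ℝ) P) A m M where
  isSymmetric := isSymmetric_toEuclideanLin_iff.2 hP.isHermitian
  lower_pos := hm.1.elim fun i hi ↦ hi ▸ hP.eigenvalues_pos i
  lower_le_upper := hM.2 hm.1
  lower_bound := mul_norm_sq_le_inner_toEuclideanCLM hP.isHermitian hm.2
  upper_bound := inner_toEuclideanCLM_le_mul_norm_sq hP.isHermitian hM.2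
  decay y := by simpa only [inner_toEuclideanCLM] using hA y

end Matrix

/-- `F` stands for `Df` and `γ` for the trajectory `t ↦ φ t x`. -/
theorem variational_system_exponentially_stable_general {E : Type*} [NormedAddCommGroup E]
    [InnerProductSpace ℝ E] {T : E →L[ℝ] E} {F : E → E →L[ℝ] E} {m M : ℝ}
    (hT : IsLyapunovOperator T (F 0) m M)
    {L : ℝ} (hL : 0 ≤ L) (hF : ∀ y, ‖F y - F 0‖ ≤ L * ‖y‖)
    {γ : ℝ → E} {a c : ℝ} (ha : 0 < a) (hγ : ∀ t, 0 ≤ t → ‖γ t‖ ≤ c * Real.exp (-a * t))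
    {u : ℝ → E} (hu : ∀ t, 0 ≤ t → HasDerivWithinAt u (F (γ t) (u t)) (Ici 0) t)
    {t : ℝ} (ht : 0 ≤ t) :
    ‖u t‖ ^ 2 ≤
      ⟪u 0, T (u 0)⟫ / m * Real.exp (2 * M * (L * c) / (a * m)) * Real.exp (-t / M) := by
  refine hT.norm_sq_le_mul_exp ha (fun s hs ↦ ?_) hu ht
  calc ‖F (γ s) - F 0‖ ≤ L * ‖γ s‖ := hF (γ s)
    _ ≤ L * (c * Real.exp (-a * s)) := mul_le_mul_of_nonneg_left (hγ s hs) hL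
    _ = L * c * Real.exp (-a * s) := (mul_assoc _ _ _).symm

/-- Exponential stability of the first-order (variational) system: if the
nominal flow is globally exponentially stable and `P` is a Lyapunov matrix for the
linearization at the origin, then the solution of the variational system along any
trajectory satisfies an explicit exponentially decaying bound. -/
theorem variational_system_exponentially_stable
    (n : ℕ)
    (D : Set (EuclideanSpace ℝ (Fin n)))
    (hDcompact : IsCompact D)
    (hDsub : ∀ x ∈ D, ∀ i, x i ∈ Set.Icc (0 : ℝ) 1)
    (f : EuclideanSpace ℝ (Fin n) → EuclideanSpace ℝ (Fin n))
    (hf0 : f 0 = 0)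
    (hfd : Differentiable ℝ f)
    (L : ℝ) (hL : 0 < L)
    (hLip : ∀ x y : EuclideanSpace ℝ (Fin n),
      ‖fderiv ℝ f x - fderiv ℝ f y‖ ≤ L * ‖x - y‖)
    (φ : ℝ → EuclideanSpace ℝ (Fin n) → EuclideanSpace ℝ (Fin n))
    (hφ0 : ∀ x ∈ D, φ 0 x = x)
    (hφD : ∀ x ∈ D, ∀ t : ℝ, 0 ≤ t → φ t x ∈ D)
    (hφderiv : ∀ x ∈ D, ∀ t : ℝ, 0 ≤ t →
      HasDerivAt (fun s => φ s x) (f (φ t x)) t)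
    -- global exponential stability with equilibrium 0
    (κ : ℝ) (hκ : 0 < κ) (a : ℝ) (ha : 0 < a)
    (hGES : ∀ x ∈ D, ∀ t : ℝ, 0 ≤ t → ‖φ t x‖ ≤ κ * ‖x‖ * Real.exp (-a * t))
    -- the Lyapunov matrix `P`
    (P : Matrix (Fin n) (Fin n) ℝ)
    (hP : P.IsHermitian) (hPpos : P.PosDef)
    (hPLyap : ∀ y : EuclideanSpace ℝ (Fin n),
      2 * ((y : Fin n → ℝ) ⬝ᵥ P.mulVec (fderiv ℝ f 0 y : Fin n → ℝ)) ≤ -‖y‖ ^ 2)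
    (lmin lmax : ℝ)
    (hlmin : IsLeast (Set.range hP.eigenvalues) lmin)
    (hlmax : IsGreatest (Set.range hP.eigenvalues) lmax)
    -- the data of the variational system
    (x : EuclideanSpace ℝ (Fin n)) (hx : x ∈ D)
    (z : EuclideanSpace ℝ (Fin n))
    (x1 : ℝ → EuclideanSpace ℝ (Fin n))
    (hx10 : x1 0 = z)
    (hx1deriv : ∀ t : ℝ, 0 ≤ t →
      HasDerivAt x1 (fderiv ℝ f (φ t x) (x1 t)) t) :
    ∀ t : ℝ, 0 ≤ t →
      ‖x1 t‖ ^ 2 ≤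
        (((z : Fin n → ℝ) ⬝ᵥ P.mulVec (z : Fin n → ℝ)) / lmin) *
          Real.exp (2 * lmax * L * κ * ‖x‖ / (a * lmin)) *
          Real.exp (-t / lmax) := by
  intro t ht
  simpa only [inner_toEuclideanCLM, hx10, ← mul_assoc] using
    variational_system_exponentially_stable_general
      (isLyapunovOperator_toEuclideanCLM hPpos hlmin hlmax hPLyap) hL.le
      (fun y ↦ by simpa only [sub_zero] using hLip y 0) ha (hGES x hx)
      (fun s hs ↦ (hx1deriv s hs).hasDerivWithinAt) ht
end
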